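/- Fix an integer K ≥ 4. Let A ∈ ℝ^{m×n} have unit ℓ₂-norm columns and satisfy the RIP of order K+1 with constant δ < 1/√K. Let x ∈ ℝ^n be K-sparse with support S = supp(x), let S' be a proper subset of S, and set r = P_{S'}^⊥ A x. Then for every j ∈ {1,…,n} \ S, |⟨r, a_j⟩| / ‖P_{S'}^⊥ a_j‖₂ < ‖r‖₂² / (√|S \ S'| · ‖x_{S\S'}‖₂). -/

import Mathlib

open Finset

noncomputable section

/-- The support of a vector as a `Finset`. -/
def vsupp {n : ℕ} (x : Fin n → ℝ) : Finset (Fin n) :=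
  Finset.univ.filter (fun i => x i ≠ 0)

/-- `A` satisfies the restricted isometry property of order `r` with constant `δ`. -/
def RIP {m n : ℕ} (A : Matrix (Fin m) (Fin n) ℝ) (r : ℕ) (δ : ℝ) : Prop :=
  ∀ x : Fin n → ℝ, (vsupp x).card ≤ r →
    (1 - δ) * (∑ i, x i ^ 2) ≤ (∑ i, (A.mulVec x) i ^ 2) ∧
      (∑ i, (A.mulVec x) i ^ 2) ≤ (1 + δ) * (∑ i, x i ^ 2)

/-- The `j`-th column of `A`. -/
def col {m n : ℕ} (A : Matrix (Fin m) (Fin n) ℝ) (j : Fin n) : Fin m → ℝ :=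
  fun i => A i j

/-- Euclidean dot product. -/
def dot {m : ℕ} (u v : Fin m → ℝ) : ℝ := ∑ i, u i * v i

/-- Squared Euclidean norm. -/
def nsq {m : ℕ} (v : Fin m → ℝ) : ℝ := ∑ i, v i ^ 2

/-- Euclidean norm. -/
def enorm {m : ℕ} (v : Fin m → ℝ) : ℝ := Real.sqrt (nsq v)

/-- Squared norm of the restriction of `x` to `T`. -/
def rsq {n : ℕ} (x : Fin n → ℝ) (T : Finset (Fin n)) : ℝ := ∑ i ∈ T, x i ^ 2

/-- Norm of the restriction of `x` to `T`. -/
def rnorm {n : ℕ} (x : Fin n → ℝ) (T : Finset (Fin n)) : ℝ := Real.sqrt (rsq x T)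

/-- Span of the columns of `A` indexed by `J`. -/
def colSpan {m n : ℕ} (A : Matrix (Fin m) (Fin n) ℝ) (J : Finset (Fin n)) :
    Submodule ℝ (EuclideanSpace ℝ (Fin m)) :=
  Submodule.span ℝ ((fun j => (WithLp.equiv 2 (Fin m → ℝ)).symm (col A j)) '' (J : Set (Fin n)))

/-- The projection `P_J^⊥ v` of `v` onto the orthogonal complement of the span of the
columns of `A` indexed by `J`. -/
def projPerp {m n : ℕ} (A : Matrix (Fin m) (Fin n) ℝ) (J : Finset (Fin n)) (v : Fin m → ℝ) :
    Fin m → ℝ :=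
  v - WithLp.equiv 2 (Fin m → ℝ)
    ((Submodule.orthogonalProjectionOnto (colSpan A J) ((WithLp.equiv 2 (Fin m → ℝ)).symm v) :
      EuclideanSpace ℝ (Fin m)))

/-- The OLS selection criterion value for index `j`, given measurements `y` and current
estimated support `Sk`. -/
def olsQuot {m n : ℕ} (A : Matrix (Fin m) (Fin n) ℝ) (y : Fin m → ℝ) (Sk : Finset (Fin n))
    (j : Fin n) : ℝ :=
  |dot (projPerp A Sk y) (col A j)| / _root_.enorm (projPerp A Sk (col A j))

/-- The estimated support of OLS after `k` iterations (ties broken towards smaller index). -/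
def olsSupp {m n : ℕ} (A : Matrix (Fin m) (Fin n) ℝ) (y : Fin m → ℝ) : ℕ → Finset (Fin n)
  | 0 => ∅
  | k + 1 =>
    let Sk := olsSupp A y k
    let cand := (Finset.univ \ Sk).filter
      (fun j => ∀ i ∈ Finset.univ \ Sk, olsQuot A y Sk i ≤ olsQuot A y Sk j)
    if h : cand.Nonempty then insert (cand.min' h) Sk else Sk

/-- The constant `C_K` from the paper. -/
def CK (K : ℕ) : ℝ :=
  if K = 1 then 1 else if K = 2 then 2/3 else if K = 3 then 4/7 else 1 / Real.sqrt K

/-!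
Write `Q` for the orthogonal projection onto the complement of the columns indexed by `S'`, and let
`w` be the normalization of `x_{S \ S'}`. The RIP of `A` survives projection: `Q A` distorts squared
norms of sparse vectors supported off `S'` by a factor in `[1 - δ, 1 + δ]`. Applied to the plane
spanned by `w` and the `j`-th basis vector, this says that `u = Q A w` and `v = Q a_j` form a nearly
orthonormal pair, so nonnegativity of two binary quadratic forms bounds `⟪u, v⟫²` by both
`(‖u‖² - (1 - δ)) (‖v‖² - (1 - δ))` and `((1 + δ) - ‖u‖²) ((1 + δ) - ‖v‖²)`. Together with
`‖v‖ ≤ ‖a_j‖ = 1`, `K δ² < 1` and `K ≥ 4` these force `K ⟪u, v⟫² < ‖u‖⁴ ‖v‖²`, and the theorem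
follows because `Q A x = ‖x_{S \ S'}‖ • u`.
-/

open WithLp (toLp)
open scoped Matrix RealInnerProductSpace

section ScalarInequality

variable {K δ p t q : ℝ}

lemma mul_lt_sq_mul_of_le_one (hK : 4 ≤ K) (hKδ : K * δ ^ 2 < 1)
    (hq : q ≤ (p - (1 - δ)) * (t - (1 - δ))) (hp : 1 - δ ≤ p) (hp1 : p ≤ 1)
    (ht : 1 - δ ≤ t) (ht1 : t ≤ 1) : K * q < p ^ 2 * t := by
  have hδ : δ < 1 / 2 := by nlinarith
  have ht_sub : t - (1 - δ) ≤ δ * t := by nlinarith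
  have hp_sq : K * δ * (p - (1 - δ)) < p ^ 2 := by
    rcases le_total 2 (K * δ) with h | h
    · nlinarith [mul_nonneg (sub_nonneg.2 h) (sub_nonneg.2 hp1), sq_nonneg (p - 1)]
    · nlinarith [mul_nonneg (sub_nonneg.2 h) (sub_nonneg.2 hp), sq_nonneg (p - 1)]
  calc K * q ≤ K * ((p - (1 - δ)) * (δ * t)) := by
        have := hq.trans (mul_le_mul_of_nonneg_left ht_sub (sub_nonneg.2 hp))
        gcongr
    _ = K * δ * (p - (1 - δ)) * t := by ring
    _ < p ^ 2 * t := by gcongr; linarith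

lemma mul_lt_sq_mul_of_one_lt (hK : 4 ≤ K) (hKδ : K * δ ^ 2 < 1)
    (hq_lower : q ≤ (p - (1 - δ)) * (t - (1 - δ)))
    (hq_upper : q ≤ ((1 + δ) - p) * ((1 + δ) - t))
    (hp1 : 1 < p) (hp : p ≤ 1 + δ) (ht : 1 - δ ≤ t) : K * q < p ^ 2 * t := by
  obtain ⟨ε, rfl⟩ : ∃ ε, p = 1 + ε := ⟨p - 1, by ring⟩
  have hε : 0 < ε := by linarith
  have hεδ : ε ≤ δ := by linarith
  have hδ : δ < 1 / 2 := by nlinarith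
  -- The weights are chosen so that the combination of the two bounds is a multiple of `t`.
  have hq : q * (1 - ε) ≤ (δ ^ 2 - ε ^ 2) * t := by
    have h_lower := mul_le_mul_of_nonneg_left hq_lower
      (mul_nonneg (sub_nonneg.2 hεδ) (by linarith : 0 ≤ 1 + δ))
    have h_upper := mul_le_mul_of_nonneg_left hq_upper
      (mul_nonneg (by linarith : 0 ≤ δ + ε) (by linarith : 0 ≤ 1 - δ))
    exact le_of_mul_le_mul_left (by linarith) (by linarith : 0 < 2 * δ)
  have hε_sq : K * (δ ^ 2 - ε ^ 2) < (1 - ε) * (1 + ε) ^ 2 := by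
    have hKε : 4 * ε ^ 2 ≤ K * ε ^ 2 := by gcongr
    have hε_cube : ε ^ 3 ≤ ε := pow_le_of_le_one hε.le (by linarith) three_ne_zero
    nlinarith
  refine lt_of_mul_lt_mul_left ?_ (by linarith : 0 ≤ 1 - ε)
  calc (1 - ε) * (K * q) = K * (q * (1 - ε)) := by ring
    _ ≤ K * ((δ ^ 2 - ε ^ 2) * t) := by gcongr
    _ = K * (δ ^ 2 - ε ^ 2) * t := by ring
    _ < (1 - ε) * (1 + ε) ^ 2 * t := by gcongr; linarith
    _ = (1 - ε) * ((1 + ε) ^ 2 * t) := by ring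

end ScalarInequality

section NearlyOrthonormal

variable {E : Type*} [NormedAddCommGroup E] [InnerProductSpace ℝ E]

/-- `u, v` is an orthonormal pair up to distortion `δ`: the map `(a, b) ↦ a u + b v` from the
Euclidean plane changes squared norms by a factor between `1 - δ` and `1 + δ`. -/
def NearlyOrthonormal (δ : ℝ) (u v : E) : Prop :=
  ∀ a b : ℝ, (1 - δ) * (a ^ 2 + b ^ 2) ≤ ‖a • u + b • v‖ ^ 2 ∧
    ‖a • u + b • v‖ ^ 2 ≤ (1 + δ) * (a ^ 2 + b ^ 2)

lemma norm_smul_add_smul_sq (u v : E) (a b : ℝ) :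
    ‖a • u + b • v‖ ^ 2 = a ^ 2 * ‖u‖ ^ 2 + 2 * a * b * ⟪u, v⟫ + b ^ 2 * ‖v‖ ^ 2 := by
  rw [norm_add_sq_real, norm_smul, norm_smul, mul_pow, mul_pow, Real.norm_eq_abs,
    Real.norm_eq_abs, sq_abs, sq_abs, real_inner_smul_left, real_inner_smul_right]
  ring

namespace NearlyOrthonormal

variable {δ : ℝ} {u v : E}

lemma norm_sq_left_mem_Icc (h : NearlyOrthonormal δ u v) :
    ‖u‖ ^ 2 ∈ Set.Icc (1 - δ) (1 + δ) := by
  simpa using h 1 0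

lemma norm_sq_right_mem_Icc (h : NearlyOrthonormal δ u v) :
    ‖v‖ ^ 2 ∈ Set.Icc (1 - δ) (1 + δ) := by
  simpa using h 0 1

lemma inner_sq_le_mul_sub_lower (h : NearlyOrthonormal δ u v) :
    ⟪u, v⟫ ^ 2 ≤ (‖u‖ ^ 2 - (1 - δ)) * (‖v‖ ^ 2 - (1 - δ)) := by
  have hdiscrim : discrim (‖u‖ ^ 2 - (1 - δ)) (2 * ⟪u, v⟫) (‖v‖ ^ 2 - (1 - δ)) ≤ 0 :=
    discrim_le_zero fun a ↦ by linarith [(h a 1).1, norm_smul_add_smul_sq u v a 1]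
  rw [discrim] at hdiscrim
  linarith

lemma inner_sq_le_mul_upper_sub (h : NearlyOrthonormal δ u v) :
    ⟪u, v⟫ ^ 2 ≤ ((1 + δ) - ‖u‖ ^ 2) * ((1 + δ) - ‖v‖ ^ 2) := by
  have hdiscrim : discrim ((1 + δ) - ‖u‖ ^ 2) (-(2 * ⟪u, v⟫)) ((1 + δ) - ‖v‖ ^ 2) ≤ 0 :=
    discrim_le_zero fun a ↦ by linarith [(h a 1).2, norm_smul_add_smul_sq u v a 1]
  rw [discrim] at hdiscrim
  linarith

theorem sqrt_mul_abs_inner_lt {K : ℝ} (h : NearlyOrthonormal δ u v) (hv : ‖v‖ ≤ 1) (hK : 4 ≤ K)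
    (hKδ : K * δ ^ 2 < 1) : √K * |⟪u, v⟫| < ‖u‖ ^ 2 * ‖v‖ := by
  have hsq : K * ⟪u, v⟫ ^ 2 < (‖u‖ ^ 2) ^ 2 * ‖v‖ ^ 2 := by
    obtain ⟨hu_lower, hu_upper⟩ := h.norm_sq_left_mem_Icc
    have hv_lower := h.norm_sq_right_mem_Icc.1
    rcases le_or_gt (‖u‖ ^ 2) 1 with hu | hu
    · exact mul_lt_sq_mul_of_le_one hK hKδ h.inner_sq_le_mul_sub_lower hu_lower hu hv_lower
        (pow_le_one₀ (norm_nonneg v) hv)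
    · exact mul_lt_sq_mul_of_one_lt hK hKδ h.inner_sq_le_mul_sub_lower
        h.inner_sq_le_mul_upper_sub hu hu_upper hv_lower
  refine lt_of_pow_lt_pow_left₀ 2 (by positivity) ?_
  rwa [mul_pow, mul_pow, Real.sq_sqrt (by linarith), sq_abs]

end NearlyOrthonormal

end NearlyOrthonormal

section Euclidean

variable {m n : ℕ}

lemma dot_eq_inner (u v : Fin m → ℝ) : dot u v = ⟪toLp 2 u, toLp 2 v⟫ := by
  simp [dot, PiLp.inner_apply, mul_comm]

lemma nsq_eq_norm_sq (v : Fin m → ℝ) : nsq v = ‖toLp 2 v‖ ^ 2 := by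
  simp [nsq, EuclideanSpace.real_norm_sq_eq]

lemma nsq_nonneg (v : Fin m → ℝ) : 0 ≤ nsq v :=
  sum_nonneg fun _ _ ↦ sq_nonneg _

lemma enorm_eq_norm (v : Fin m → ℝ) : _root_.enorm v = ‖toLp 2 v‖ := by
  rw [_root_.enorm, nsq_eq_norm_sq, Real.sqrt_sq (norm_nonneg _)]

lemma rnorm_eq_norm_indicator (x : Fin n → ℝ) (T : Finset (Fin n)) :
    rnorm x T = ‖toLp 2 ((T : Set (Fin n)).indicator x)‖ := by
  have hsum : rsq x T = nsq ((T : Set (Fin n)).indicator x) := by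
    simp [rsq, nsq, Set.indicator_apply, ite_pow]
  rw [rnorm, hsum, nsq_eq_norm_sq, Real.sqrt_sq (norm_nonneg _)]

lemma mem_vsupp {x : Fin n → ℝ} {i : Fin n} : i ∈ vsupp x ↔ x i ≠ 0 := by
  simp [vsupp]

lemma vsupp_nonempty {x : Fin n → ℝ} : (vsupp x).Nonempty ↔ x ≠ 0 := by
  simp only [Finset.Nonempty, mem_vsupp, Function.ne_iff, Pi.zero_apply]

lemma vsupp_subset_iff {x : Fin n → ℝ} {J : Finset (Fin n)} :
    vsupp x ⊆ J ↔ ∀ i ∉ J, x i = 0 := by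
  simp only [subset_iff, mem_vsupp, not_imp_comm]

lemma rnorm_pos {x : Fin n → ℝ} {T : Finset (Fin n)} (hT : T.Nonempty) (hTx : T ⊆ vsupp x) :
    0 < rnorm x T :=
  Real.sqrt_pos.2 <| sum_pos (fun _ hi ↦ sq_pos_of_ne_zero (mem_vsupp.1 (hTx hi))) hT

lemma vsupp_indicator (x : Fin n → ℝ) (T : Finset (Fin n)) :
    vsupp ((T : Set (Fin n)).indicator x) = vsupp x ∩ T := by
  ext i
  simp [mem_vsupp, and_comm]

lemma vsupp_single_one (j : Fin n) : vsupp (Pi.single j 1) = {j} := by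
  ext i
  simp [mem_vsupp, Pi.single_apply]

lemma vsupp_smul_subset (a : ℝ) (x : Fin n → ℝ) : vsupp (a • x) ⊆ vsupp x := fun _ hi ↦
  mem_vsupp.2 (right_ne_zero_of_mul (mem_vsupp.1 hi))

lemma vsupp_smul {a : ℝ} (ha : a ≠ 0) (x : Fin n → ℝ) : vsupp (a • x) = vsupp x := by
  ext i
  simp [mem_vsupp, ha]

lemma vsupp_add_subset (x y : Fin n → ℝ) : vsupp (x + y) ⊆ vsupp x ∪ vsupp y := by
  rw [vsupp_subset_iff]
  intro i hi
  simp_all [mem_vsupp]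

lemma vsupp_sub_subset (x y : Fin n → ℝ) : vsupp (x - y) ⊆ vsupp x ∪ vsupp y := by
  rw [vsupp_subset_iff]
  intro i hi
  simp_all [mem_vsupp]

lemma inner_eq_zero_of_disjoint_vsupp {x y : Fin n → ℝ} (h : Disjoint (vsupp x) (vsupp y)) :
    ⟪toLp 2 x, toLp 2 y⟫ = 0 := by
  rw [← dot_eq_inner]
  refine sum_eq_zero fun i _ ↦ ?_
  by_contra hxy
  exact disjoint_left.1 h (mem_vsupp.2 (left_ne_zero_of_mul hxy))
    (mem_vsupp.2 (right_ne_zero_of_mul hxy))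

end Euclidean

section Projection

variable {m n : ℕ} (A : Matrix (Fin m) (Fin n) ℝ) (J : Finset (Fin n))

lemma mulVec_single_one_eq_col (j : Fin n) : A *ᵥ Pi.single j 1 = col A j :=
  Matrix.mulVec_single_one A j

lemma toLp_mulVec_eq_sum {c : Fin n → ℝ} (hc : vsupp c ⊆ J) :
    toLp 2 (A *ᵥ c) = ∑ i ∈ J, c i • toLp 2 (col A i) := by
  rw [sum_subset (subset_univ J) fun i _ hi ↦ by rw [vsupp_subset_iff.1 hc i hi, zero_smul]]
  ext k
  simp [Matrix.mulVec, dotProduct, col, mul_comm]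

lemma mem_colSpan_iff {v : EuclideanSpace ℝ (Fin m)} :
    v ∈ colSpan A J ↔ ∃ c, vsupp c ⊆ J ∧ toLp 2 (A *ᵥ c) = v := by
  rw [colSpan, Submodule.mem_span_image_finset_iff_exists_fun']
  constructor
  · rintro ⟨c, rfl⟩
    have hc : vsupp ((J : Set (Fin n)).indicator c) ⊆ J := by
      rw [vsupp_indicator]
      exact inter_subset_right
    refine ⟨_, hc, (toLp_mulVec_eq_sum A J hc).trans (sum_congr rfl fun i hi ↦ ?_)⟩
    rw [Set.indicator_of_mem (mem_coe.2 hi)]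
    rfl
  · rintro ⟨c, hc, rfl⟩
    exact ⟨c, (toLp_mulVec_eq_sum A J hc).symm⟩

lemma toLp_projPerp (v : Fin m → ℝ) :
    toLp 2 (projPerp A J v) = (colSpan A J)ᗮ.starProjection (toLp 2 v) := by
  rw [Submodule.starProjection_orthogonal_val]
  rfl

lemma dot_projPerp (u v : Fin m → ℝ) :
    dot (projPerp A J u) v =
      ⟪(colSpan A J)ᗮ.starProjection (toLp 2 u), (colSpan A J)ᗮ.starProjection (toLp 2 v)⟫ := by
  rw [dot_eq_inner, toLp_projPerp, ← Submodule.inner_starProjection_left_eq_right,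
    Submodule.starProjection_eq_self_iff.2 (Submodule.starProjection_apply_mem _ _)]

lemma starProjection_mulVec_indicator (x : Fin n → ℝ) :
    (colSpan A J)ᗮ.starProjection
        (toLp 2 (A *ᵥ ((vsupp x \ J : Finset _) : Set (Fin n)).indicator x)) =
      (colSpan A J)ᗮ.starProjection (toLp 2 (A *ᵥ x)) := by
  rw [← sub_eq_zero, ← map_sub, ← WithLp.toLp_sub, ← Matrix.mulVec_sub]
  refine Submodule.starProjection_orthogonal_apply_eq_zero
    ((mem_colSpan_iff A J).2 ⟨_, vsupp_subset_iff.2 fun i hi ↦ ?_, rfl⟩)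
  by_cases hix : x i = 0 <;> simp [mem_vsupp, hix, hi]

end Projection

namespace RIP

variable {m n k : ℕ} {A : Matrix (Fin m) (Fin n) ℝ} {δ : ℝ} {J : Finset (Fin n)}

lemma norm_sq_bounds (hA : RIP A k δ) {w : Fin n → ℝ} (hw : #(vsupp w) ≤ k) :
    (1 - δ) * ‖toLp 2 w‖ ^ 2 ≤ ‖toLp 2 (A *ᵥ w)‖ ^ 2 ∧
      ‖toLp 2 (A *ᵥ w)‖ ^ 2 ≤ (1 + δ) * ‖toLp 2 w‖ ^ 2 := by
  simpa only [EuclideanSpace.real_norm_sq_eq] using hA w hw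

lemma norm_sq_starProjection_le (hA : RIP A k δ) {w : Fin n → ℝ} (hw : #(vsupp w) ≤ k) :
    ‖(colSpan A J)ᗮ.starProjection (toLp 2 (A *ᵥ w))‖ ^ 2 ≤ (1 + δ) * ‖toLp 2 w‖ ^ 2 :=
  calc ‖(colSpan A J)ᗮ.starProjection (toLp 2 (A *ᵥ w))‖ ^ 2 ≤ ‖toLp 2 (A *ᵥ w)‖ ^ 2 := by
        gcongr
        exact Submodule.norm_starProjection_apply_le _ _
    _ ≤ (1 + δ) * ‖toLp 2 w‖ ^ 2 := (hA.norm_sq_bounds hw).2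

lemma le_norm_sq_starProjection (hA : RIP A k δ) (hδ : δ ≤ 1) {w : Fin n → ℝ}
    (hwJ : Disjoint (vsupp w) J) (hw : #(vsupp w ∪ J) ≤ k) :
    (1 - δ) * ‖toLp 2 w‖ ^ 2 ≤ ‖(colSpan A J)ᗮ.starProjection (toLp 2 (A *ᵥ w))‖ ^ 2 := by
  obtain ⟨c, hcJ, hc⟩ := (mem_colSpan_iff A J).1
    (Submodule.starProjection_apply_mem (colSpan A J) (toLp 2 (A *ᵥ w)))
  have hproj : (colSpan A J)ᗮ.starProjection (toLp 2 (A *ᵥ w)) = toLp 2 (A *ᵥ (w - c)) := by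
    rw [Submodule.starProjection_orthogonal_val, ← hc, Matrix.mulVec_sub, WithLp.toLp_sub]
  have hcard : #(vsupp (w - c)) ≤ k :=
    (card_le_card ((vsupp_sub_subset w c).trans (union_subset_union_right hcJ))).trans hw
  have hnorm : ‖toLp 2 w‖ ^ 2 ≤ ‖toLp 2 (w - c)‖ ^ 2 := by
    rw [WithLp.toLp_sub, norm_sub_sq_real,
      inner_eq_zero_of_disjoint_vsupp (disjoint_of_subset_right hcJ hwJ)]
    linarith [sq_nonneg ‖toLp 2 c‖]
  rw [hproj]
  exact (mul_le_mul_of_nonneg_left hnorm (sub_nonneg.2 hδ)).trans (hA.norm_sq_bounds hcard).1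

lemma nearlyOrthonormal_starProjection (hA : RIP A k δ) (hδ : δ ≤ 1) {w z : Fin n → ℝ}
    (hw : ‖toLp 2 w‖ = 1) (hz : ‖toLp 2 z‖ = 1) (hwz : Disjoint (vsupp w) (vsupp z))
    (hJ : Disjoint (vsupp w ∪ vsupp z) J) (hcard : #(vsupp w ∪ vsupp z ∪ J) ≤ k) :
    NearlyOrthonormal δ ((colSpan A J)ᗮ.starProjection (toLp 2 (A *ᵥ w)))
      ((colSpan A J)ᗮ.starProjection (toLp 2 (A *ᵥ z))) := by
  intro a b
  have hnorm : ‖toLp 2 (a • w + b • z)‖ ^ 2 = a ^ 2 + b ^ 2 := by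
    rw [WithLp.toLp_add, WithLp.toLp_smul, WithLp.toLp_smul, norm_smul_add_smul_sq,
      inner_eq_zero_of_disjoint_vsupp hwz, hw, hz]
    ring
  have hsupp : vsupp (a • w + b • z) ⊆ vsupp w ∪ vsupp z :=
    (vsupp_add_subset _ _).trans
      (union_subset_union (vsupp_smul_subset a w) (vsupp_smul_subset b z))
  have hcard' : #(vsupp (a • w + b • z) ∪ J) ≤ k :=
    (card_le_card (union_subset_union_left hsupp)).trans hcard
  rw [← map_smul, ← map_smul, ← map_add, ← WithLp.toLp_smul, ← WithLp.toLp_smul,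
    ← WithLp.toLp_add, ← Matrix.mulVec_smul, ← Matrix.mulVec_smul, ← Matrix.mulVec_add, ← hnorm]
  exact ⟨hA.le_norm_sq_starProjection hδ (disjoint_of_subset_left hsupp hJ) hcard',
    hA.norm_sq_starProjection_le ((card_le_card subset_union_left).trans hcard')⟩

theorem sqrt_mul_norm_mul_abs_inner_lt (hA : RIP A k δ) {K : ℝ} (hK : 4 ≤ K)
    (hKδ : K * δ ^ 2 < 1) {z : Fin n → ℝ} (hz : z ≠ 0) {j : Fin n} (hj : ‖toLp 2 (col A j)‖ ≤ 1)
    (hjz : j ∉ vsupp z) (hJ : Disjoint (vsupp z ∪ {j}) J) (hcard : #(vsupp z ∪ {j} ∪ J) ≤ k) :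
    √K * ‖toLp 2 z‖ * |⟪(colSpan A J)ᗮ.starProjection (toLp 2 (A *ᵥ z)),
        (colSpan A J)ᗮ.starProjection (toLp 2 (col A j))⟫| <
      ‖(colSpan A J)ᗮ.starProjection (toLp 2 (A *ᵥ z))‖ ^ 2 *
        ‖(colSpan A J)ᗮ.starProjection (toLp 2 (col A j))‖ := by
  set ρ := ‖toLp 2 z‖
  set u := (colSpan A J)ᗮ.starProjection (toLp 2 (A *ᵥ (ρ⁻¹ • z))) with hu
  set v := (colSpan A J)ᗮ.starProjection (toLp 2 (col A j)) with hv
  have hρ : 0 < ρ := norm_pos_iff.2 ((WithLp.toLp_eq_zero 2).not.2 hz)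
  have hδ : δ ≤ 1 := by nlinarith
  have hproj : (colSpan A J)ᗮ.starProjection (toLp 2 (A *ᵥ z)) = ρ • u := by
    rw [hu, ← map_smul, ← WithLp.toLp_smul, ← Matrix.mulVec_smul, smul_inv_smul₀ hρ.ne']
  have hnormalized : ‖toLp 2 (ρ⁻¹ • z)‖ = 1 := by
    rw [WithLp.toLp_smul, norm_smul, norm_inv, Real.norm_of_nonneg hρ.le, inv_mul_cancel₀ hρ.ne']
  have hnear : NearlyOrthonormal δ u v := by
    rw [hu, hv, ← mulVec_single_one_eq_col]
    refine hA.nearlyOrthonormal_starProjection hδ hnormalized (by simp) ?_ ?_ ?_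
    all_goals rw [vsupp_single_one, vsupp_smul (inv_ne_zero hρ.ne')]
    exacts [disjoint_singleton_right.2 hjz, hJ, hcard]
  have hv_le : ‖v‖ ≤ 1 := (Submodule.norm_starProjection_apply_le _ _).trans hj
  calc √K * ρ * |⟪(colSpan A J)ᗮ.starProjection (toLp 2 (A *ᵥ z)), v⟫|
      = ρ ^ 2 * (√K * |⟪u, v⟫|) := by
        rw [hproj, real_inner_smul_left, abs_mul, abs_of_pos hρ]
        ring
    _ < ρ ^ 2 * (‖u‖ ^ 2 * ‖v‖) := by
        have := hnear.sqrt_mul_abs_inner_lt hv_le hK hKδ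
        gcongr
    _ = ‖(colSpan A J)ᗮ.starProjection (toLp 2 (A *ᵥ z))‖ ^ 2 * ‖v‖ := by
        rw [hproj, norm_smul, Real.norm_of_nonneg hρ.le]
        ring

theorem sqrt_mul_rnorm_mul_abs_dot_lt (hA : RIP A (k + 1) δ) {K : ℝ} (hK : 4 ≤ K)
    (hKδ : K * δ ^ 2 < 1) {x : Fin n → ℝ} (hxJ : ¬vsupp x ⊆ J) (hcard : #(vsupp x ∪ J) ≤ k)
    {j : Fin n} (hj : j ∉ vsupp x ∪ J) (hcol : nsq (col A j) ≤ 1) :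
    √K * rnorm x (vsupp x \ J) * |dot (projPerp A J (A *ᵥ x)) (col A j)| <
      nsq (projPerp A J (A *ᵥ x)) * _root_.enorm (projPerp A J (col A j)) := by
  have hsupp : vsupp (((vsupp x \ J : Finset _) : Set (Fin n)).indicator x) = vsupp x \ J := by
    rw [vsupp_indicator, inter_eq_right.2 sdiff_subset]
  obtain ⟨hjx, hjJ⟩ := notMem_union.1 hj
  rw [dot_projPerp, nsq_eq_norm_sq, enorm_eq_norm, toLp_projPerp, toLp_projPerp,
    rnorm_eq_norm_indicator, ← starProjection_mulVec_indicator]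
  refine hA.sqrt_mul_norm_mul_abs_inner_lt hK hKδ ?_ ?_ ?_ ?_ ?_
  · rw [← vsupp_nonempty, hsupp, sdiff_nonempty]
    exact hxJ
  · rwa [nsq_eq_norm_sq, sq_le_one_iff₀ (norm_nonneg _)] at hcol
  · rw [hsupp]
    exact fun h ↦ hjx (mem_sdiff.1 h).1
  · rw [hsupp, disjoint_union_left]
    exact ⟨sdiff_disjoint, disjoint_singleton_left.2 hjJ⟩
  · rw [hsupp, union_right_comm, sdiff_union_self_eq_union]
    exact (card_union_le _ _).trans (Nat.add_le_add_right hcard 1)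

end RIP

/-- for `K ≥ 4`, unit-norm columns and RIP of order `K+1` with `δ < 1/√K`,
for every `j ∉ S`, `|⟨r, a_j⟩| / ‖P_{S'}^⊥ a_j‖₂ < ‖r‖₂² / (√|S\S'| ‖x_{S\S'}‖₂)`. -/
theorem stmt7 {m n K : ℕ} (hK : 4 ≤ K) (A : Matrix (Fin m) (Fin n) ℝ) (δ : ℝ)
    (hδ0 : 0 ≤ δ) (hδ : δ < 1 / Real.sqrt K)
    (hcols : ∀ j, nsq (col A j) = 1)
    (hRIP : RIP A (K + 1) δ)
    (x : Fin n → ℝ) (S : Finset (Fin n)) (hS : vsupp x = S) (hKs : S.card ≤ K)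
    (S' : Finset (Fin n)) (hS' : S' ⊂ S)
    (r : Fin m → ℝ) (hr : r = projPerp A S' (A.mulVec x))
    (j : Fin n) (hj : j ∉ S) :
    |dot r (col A j)| / _root_.enorm (projPerp A S' (col A j)) <
      nsq r / (Real.sqrt ((S \ S').card) * rnorm x (S \ S')) := by
  subst hS hr
  have hKδ : (K : ℝ) * δ ^ 2 < 1 := by
    rwa [one_div, ← Real.sqrt_inv, Real.lt_sqrt hδ0, ← one_div, lt_div_iff₀' (by positivity)] at hδ
  have hunion : vsupp x ∪ S' = vsupp x := union_eq_left.2 hS'.1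
  have hmain := hRIP.sqrt_mul_rnorm_mul_abs_dot_lt (mod_cast hK) hKδ hS'.2 (by rwa [hunion])
    (by rwa [hunion]) (hcols j).le
  have hT : (vsupp x \ S').Nonempty := sdiff_nonempty.2 hS'.2
  have hcard_le : #(vsupp x \ S') ≤ K := (card_le_card sdiff_subset).trans hKs
  have hrnorm : 0 < rnorm x (vsupp x \ S') := rnorm_pos hT sdiff_subset
  have hdenom : 0 < _root_.enorm (projPerp A S' (col A j)) :=
    pos_of_mul_pos_right (lt_of_le_of_lt (by positivity) hmain) (nsq_nonneg _)
  rw [div_lt_div_iff₀ hdenom (mul_pos (Real.sqrt_pos.2 (mod_cast hT.card_pos)) hrnorm), mul_comm]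
  refine lt_of_le_of_lt ?_ hmain
  gcongr
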